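/- Let B > 0, p ∈ ℝ, and let g : ℝ → ℝ be bounded and measurable. For every α > 0 there exists β > 0 such that for every complex-valued Schwartz function f on ℝ one has ‖x ↦ g(x)(2p + 2Bx + g(x))·f(x)‖ ≤ α‖−f'' + B²x²f‖ + β‖f‖. -/

import Mathlib

open MeasureTheory

/-!
Put `W x = B x`. Integrating by parts, `⟪f, (-Δ + W²) f⟫ = ‖∇f‖² + ‖W f‖²`, so by Cauchy-Schwarz
`‖W f‖² ≤ ‖(-Δ + W²) f‖ ‖f‖`. Young's inequality then bounds any multiple of `‖W f‖` by an
arbitrarily small multiple of `‖(-Δ + W²) f‖` plus a multiple of `‖f‖`. The perturbation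
`g (2p + 2W + g)` grows at most linearly in `|W|`, which is only half the order of the operator.
-/

theorem mul_le_add_of_sq_le_mul {α u x y : ℝ} (a : ℝ) (hα : 0 < α) (hx : 0 ≤ x) (hy : 0 ≤ y)
    (h : u ^ 2 ≤ x * y) : a * u ≤ α * x + a ^ 2 / (4 * α) * y := by
  refine le_of_sq_le_sq ?_ (by positivity)
  calc (a * u) ^ 2 = a ^ 2 * u ^ 2 := mul_pow a u 2
    _ ≤ a ^ 2 * (x * y) := by gcongr
    _ = 4 * (α * x) * (a ^ 2 / (4 * α) * y) := by field_simp
    _ ≤ (α * x + a ^ 2 / (4 * α) * y) ^ 2 := four_mul_le_sq_add _ _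

theorem abs_mul_two_mul_add_two_mul_add_le {g M : ℝ} (hg : |g| ≤ M) (k y : ℝ) :
    |g * (2 * k + 2 * y + g)| ≤ 2 * M * |y| + M * (2 * |k| + M) := by
  have hM : 0 ≤ M := (abs_nonneg g).trans hg
  calc |g * (2 * k + 2 * y + g)| = |g| * |2 * k + 2 * y + g| := abs_mul _ _
    _ ≤ M * (|2 * k| + |2 * y| + M) := by grw [abs_add_three, hg, hg]
    _ = 2 * M * |y| + M * (2 * |k| + M) := by rw [abs_mul, abs_mul, abs_two]; ring

theorem norm_smul_le_of_abs_le {F : Type*} [SeminormedAddCommGroup F] [NormedSpace ℝ F]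
    {v w a b : ℝ} (h : |v| ≤ a * |w| + b) (z : F) :
    ‖v • z‖ ≤ |a| * ‖w • z‖ + |b| * ‖z‖ := by
  rw [norm_smul, norm_smul, Real.norm_eq_abs, Real.norm_eq_abs, ← mul_assoc, ← add_mul]
  grw [h, le_abs_self a, le_abs_self b]

section LpNorm

variable {X F G H : Type*} [MeasurableSpace X] {μ : Measure X} {q : ENNReal}
  [NormedAddCommGroup F] [NormedAddCommGroup G] [NormedAddCommGroup H]

theorem memLp_of_norm_le_add {v : X → F} {u : X → G} {w : X → H} {a b : ℝ}
    (hv : AEStronglyMeasurable v μ) (hu : MemLp u q μ) (hw : MemLp w q μ)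
    (h : ∀ x, ‖v x‖ ≤ a * ‖u x‖ + b * ‖w x‖) : MemLp v q μ :=
  ((hu.norm.const_mul a).add (hw.norm.const_mul b)).mono' hv (.of_forall h)

theorem lpNorm_le_of_norm_le_add {v : X → F} {u : X → G} {w : X → H} {a b : ℝ} (hq : 1 ≤ q)
    (ha : 0 ≤ a) (hb : 0 ≤ b) (hu : MemLp u q μ) (hw : MemLp w q μ)
    (h : ∀ x, ‖v x‖ ≤ a * ‖u x‖ + b * ‖w x‖) :
    lpNorm v q μ ≤ a * lpNorm u q μ + b * lpNorm w q μ := by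
  have hau : MemLp (a • fun x ↦ ‖u x‖) q μ := hu.norm.const_smul a
  have hbw : MemLp (b • fun x ↦ ‖w x‖) q μ := hw.norm.const_smul b
  calc lpNorm v q μ ≤ lpNorm ((a • fun x ↦ ‖u x‖) + b • fun x ↦ ‖w x‖) q μ :=
        lpNorm_mono_real (hau.add hbw) h
    _ ≤ lpNorm (a • fun x ↦ ‖u x‖) q μ + lpNorm (b • fun x ↦ ‖w x‖) q μ :=
        lpNorm_add_le hau hq
    _ = a * lpNorm u q μ + b * lpNorm w q μ := by
        simp [lpNorm_const_smul, lpNorm_norm, hu.1, hw.1, abs_of_nonneg, ha, hb]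

end LpNorm

section Schwartz

open Laplacian SchwartzMap

theorem laplacian_real_apply {F : Type*} [NormedAddCommGroup F] [NormedSpace ℝ F]
    (f : 𝓢(ℝ, F)) (x : ℝ) : Δ f x = deriv (deriv f) x := by
  rw [laplacian_apply, InnerProductSpace.laplacian_eq_iteratedDeriv_real, iteratedDeriv_succ,
    iteratedDeriv_one]

variable {E F : Type*} [NormedAddCommGroup E] [NormedSpace ℝ E] [MeasurableSpace E]
  [OpensMeasurableSpace E] [NormedAddCommGroup F] [SecondCountableTopologyEither E F]
  (μ : Measure E) [μ.HasTemperateGrowth]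

theorem norm_toLp_eq_lpNorm [NormedSpace ℝ F] (f : 𝓢(E, F)) (q : ENNReal) :
    ‖f.toLp q μ‖ = lpNorm f q μ := by
  rw [norm_toLp, toReal_eLpNorm (f.memLp q μ).1]

theorem real_inner_toLp_toLp_eq_integral [InnerProductSpace ℝ F] (f g : 𝓢(E, F)) :
    inner ℝ (f.toLp 2 μ) (g.toLp 2 μ) = ∫ x, inner ℝ (f x) (g x) ∂μ := by
  rw [L2.inner_def]
  refine integral_congr_ae ?_
  filter_upwards [f.coeFn_toLp 2 μ, g.coeFn_toLp 2 μ] with x hf hg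
  rw [hf, hg]

end Schwartz

section Schrodinger

open Laplacian LineDeriv SchwartzMap

variable {E F : Type*} [NormedAddCommGroup E] [InnerProductSpace ℝ E] [FiniteDimensional ℝ E]
  [MeasurableSpace E] [BorelSpace E] [NormedAddCommGroup F] [InnerProductSpace ℝ F]
  (μ : Measure E) [μ.IsAddHaarMeasure]

theorem inner_toLp_lineDeriv_lineDeriv_self (f : 𝓢(E, F)) (v : E) :
    inner ℝ (f.toLp 2 μ) ((∂_{v} (∂_{v} f)).toLp 2 μ) = -‖(∂_{v} f).toLp 2 μ‖ ^ 2 := by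
  rw [← real_inner_self_eq_norm_sq, real_inner_toLp_toLp_eq_integral,
    real_inner_toLp_toLp_eq_integral]
  exact integral_bilinear_lineDerivOp_right_eq_neg_left f (∂_{v} f) (innerSL ℝ) v

theorem inner_toLp_laplacian_self_nonpos (f : 𝓢(E, F)) :
    inner ℝ (f.toLp 2 μ) ((Δ f).toLp 2 μ) ≤ 0 := by
  rw [laplacian_eq_sum (stdOrthonormalBasis ℝ E)]
  simp only [← toLpCLM_apply (𝕜 := ℝ), map_sum, inner_sum]
  refine Finset.sum_nonpos fun i _ ↦ ?_
  simp only [toLpCLM_apply, inner_toLp_lineDeriv_lineDeriv_self]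
  exact neg_nonpos.2 (sq_nonneg _)

theorem inner_toLp_smulLeftCLM_sq {W : E → ℝ} (hW : W.HasTemperateGrowth) (f : 𝓢(E, F)) :
    inner ℝ (f.toLp 2 μ) ((smulLeftCLM F (W ^ 2) f).toLp 2 μ) =
      ‖(smulLeftCLM F W f).toLp 2 μ‖ ^ 2 := by
  rw [← real_inner_self_eq_norm_sq, real_inner_toLp_toLp_eq_integral,
    real_inner_toLp_toLp_eq_integral]
  congr with x
  rw [smulLeftCLM_apply_apply (hW.pow 2), smulLeftCLM_apply_apply hW, Pi.pow_apply, pow_two,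
    mul_smul, real_inner_smul_right, real_inner_smul_left, real_inner_smul_right]

theorem norm_smulLeftCLM_toLp_sq_le {W : E → ℝ} (hW : W.HasTemperateGrowth) (f : 𝓢(E, F)) :
    ‖(smulLeftCLM F W f).toLp 2 μ‖ ^ 2 ≤
      ‖(-Δ f + smulLeftCLM F (W ^ 2) f).toLp 2 μ‖ * ‖f.toLp 2 μ‖ := by
  calc ‖(smulLeftCLM F W f).toLp 2 μ‖ ^ 2
      ≤ -inner ℝ (f.toLp 2 μ) ((Δ f).toLp 2 μ) + ‖(smulLeftCLM F W f).toLp 2 μ‖ ^ 2 :=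
        le_add_of_nonneg_left (neg_nonneg.2 (inner_toLp_laplacian_self_nonpos μ f))
    _ = inner ℝ (f.toLp 2 μ) ((-Δ f + smulLeftCLM F (W ^ 2) f).toLp 2 μ) := by
        rw [← inner_toLp_smulLeftCLM_sq μ hW, ← inner_neg_right, ← inner_add_right]
        simp only [← toLpCLM_apply (𝕜 := ℝ), map_add, map_neg]
    _ ≤ ‖(-Δ f + smulLeftCLM F (W ^ 2) f).toLp 2 μ‖ * ‖f.toLp 2 μ‖ :=
        (real_inner_le_norm _ _).trans_eq (mul_comm _ _)

theorem mul_lpNorm_smulLeftCLM_le {W : E → ℝ} (hW : W.HasTemperateGrowth) (a : ℝ) {α : ℝ}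
    (hα : 0 < α) (f : 𝓢(E, F)) :
    a * lpNorm (smulLeftCLM F W f) 2 μ ≤
      α * lpNorm (-Δ f + smulLeftCLM F (W ^ 2) f : 𝓢(E, F)) 2 μ +
        a ^ 2 / (4 * α) * lpNorm f 2 μ := by
  simp only [← norm_toLp_eq_lpNorm]
  exact mul_le_add_of_sq_le_mul a hα (norm_nonneg _) (norm_nonneg _)
    (norm_smulLeftCLM_toLp_sq_le μ hW f)

/-- The `MemLp` clause rules out that the left-hand side is small only because `∞.toReal = 0`. -/
theorem stmt_4_general {V W : E → ℝ} (hV : AEStronglyMeasurable V μ)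
    (hW : W.HasTemperateGrowth) {a b : ℝ} (hVW : ∀ x, |V x| ≤ a * |W x| + b) {α : ℝ}
    (hα : 0 < α) :
    ∃ β : ℝ, 0 < β ∧ ∀ f : 𝓢(E, F),
      MemLp (fun x ↦ V x • f x) 2 μ ∧
        (eLpNorm (fun x ↦ V x • f x) 2 μ).toReal ≤
          α * (eLpNorm (fun x ↦ -Δ f x + W x ^ 2 • f x) 2 μ).toReal +
            β * (eLpNorm f 2 μ).toReal := by
  refine ⟨|a| ^ 2 / (4 * α) + |b| + 1, by positivity, fun f ↦ ?_⟩
  set u := smulLeftCLM F W f with hu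
  set h := -Δ f + smulLeftCLM F (W ^ 2) f with hh
  have h_eq : (fun x ↦ -Δ f x + W x ^ 2 • f x) = h := by
    ext x
    simp [hh, smulLeftCLM_apply_apply (hW.pow 2)]
  have hVf_le (x : E) : ‖V x • f x‖ ≤ |a| * ‖u x‖ + |b| * ‖f x‖ := by
    rw [hu, smulLeftCLM_apply_apply hW]
    exact norm_smul_le_of_abs_le (hVW x) (f x)
  have hVf : MemLp (fun x ↦ V x • f x) 2 μ :=
    memLp_of_norm_le_add (hV.smul (f.memLp 2 μ).1) (u.memLp 2 μ) (f.memLp 2 μ) hVf_le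
  refine ⟨hVf, ?_⟩
  rw [h_eq, toReal_eLpNorm hVf.1, toReal_eLpNorm (h.memLp 2 μ).1, toReal_eLpNorm (f.memLp 2 μ).1]
  have hf_nonneg : 0 ≤ lpNorm f 2 μ := lpNorm_nonneg
  calc lpNorm (fun x ↦ V x • f x) 2 μ
      ≤ |a| * lpNorm u 2 μ + |b| * lpNorm f 2 μ :=
        lpNorm_le_of_norm_le_add one_le_two (abs_nonneg a) (abs_nonneg b) (u.memLp 2 μ)
          (f.memLp 2 μ) hVf_le
    _ ≤ α * lpNorm h 2 μ + |a| ^ 2 / (4 * α) * lpNorm f 2 μ + |b| * lpNorm f 2 μ := by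
        grw [mul_lpNorm_smulLeftCLM_le μ hW |a| hα f]
    _ ≤ α * lpNorm h 2 μ + (|a| ^ 2 / (4 * α) + |b| + 1) * lpNorm f 2 μ := by linarith

end Schrodinger

/-- Let B > 0, p ∈ ℝ, and let g : ℝ → ℝ be bounded and measurable. For every
α > 0 there exists β > 0 such that for every complex-valued Schwartz function f
on ℝ one has ‖x ↦ g(x)(2p + 2Bx + g(x))·f(x)‖ ≤ α‖−f'' + B²x²f‖ + β‖f‖. -/
theorem stmt_4 (B : ℝ) (hB : 0 < B) (p : ℝ) (g : ℝ → ℝ)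
    (hg : Measurable g) (hbd : ∃ M : ℝ, ∀ x : ℝ, |g x| ≤ M) (α : ℝ) (hα : 0 < α) :
    ∃ β : ℝ, 0 < β ∧
      ∀ f : SchwartzMap ℝ ℂ,
        (eLpNorm (fun x : ℝ =>
            ((g x * (2 * p + 2 * B * x + g x) : ℝ) : ℂ) * f x) 2 volume).toReal ≤
          α * (eLpNorm (fun x : ℝ =>
              -(deriv (deriv f) x) + ((B ^ 2 * x ^ 2 : ℝ) : ℂ) * f x) 2 volume).toReal +
            β * (eLpNorm (fun x : ℝ => f x) 2 volume).toReal := by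
  obtain ⟨M, hM⟩ := hbd
  obtain ⟨β, hβ, h⟩ := stmt_4_general (F := ℂ) volume (W := (B * ·)) (a := 2 * M)
    (V := fun x ↦ g x * (2 * p + 2 * B * x + g x)) (by fun_prop) (by fun_prop)
    (fun x ↦ by simpa only [mul_assoc] using
      abs_mul_two_mul_add_two_mul_add_le (hM x) p (B * x)) hα
  exact ⟨β, hβ, fun f ↦ by simpa [laplacian_real_apply, mul_pow] using (h f).2⟩
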